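/- Fix T > 0, N > 0 and assume the coefficients b, σ have linear growth uniformly in time. Then there exists a constant c̄₀ > 0, depending only on N, |x₀|, C_L, ∫₀ᵀ |K(t)|² dt and T (and not on φ or v), such that every solution φ of the controlled Volterra equation with a control v ∈ L²([0,T];ℝᵐ) satisfying ∫₀ᵀ |v_s|² ds ≤ N obeys sup_{t∈[0,T]} |φ_t| ≤ c̄₀. -/

import Mathlib

/-!
Write `g = 1 + |φ|` and `w = 1 + |v|`. Linear growth bounds the integrand of the Volterra equation
by `|K(t-s)| · C_L g(s) w(s)`, so the Cauchy–Schwarz inequality and the substitution `s ↦ t - s`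
give
`g(t) ≤ 1 + |x₀| + (∫₀ᵀ |K|²)^{1/2} (∫₀ᵗ C_L² g(s)² w(s)² ds)^{1/2}`.
Squaring, `u = g²` satisfies `u(t) ≤ 2(1+|x₀|)² + ∫₀ᵗ h(s) u(s) ds` with the integrable weight
`h = 2 C_L² (∫₀ᵀ |K|²) w²`, whose total mass is at most `2 C_L² (∫₀ᵀ |K|²) (2T + 2N)`.

A Gronwall inequality with an `L¹` weight (`gronwall_L1`) concludes. It is proved by
induction on the number of pieces of mass `1/2` into which `h` is cut: on each piece the
integral term absorbs at most half of the maximum of `u`. The resulting bound `gronwallSeq a k`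
depends only on the constant `a` and on the number `k` of pieces.
-/


open MeasureTheory Set

/-- Frobenius norm of a real matrix. -/
noncomputable def frobNorm {n m : ℕ} (A : Matrix (Fin n) (Fin m) ℝ) : ℝ :=
  Real.sqrt (∑ i, ∑ j, (A i j) ^ 2)

/-- Euclidean norm of a vector in `ℝⁿ`. -/
noncomputable def euclNorm {n : ℕ} (x : Fin n → ℝ) : ℝ :=
  Real.sqrt (∑ i, x i ^ 2)

/-- A continuous path `φ` is a solution of the controlled Volterra equation
`φ t = x₀ + ∫₀ᵗ K(t-s)[b(s,φ s) + σ(s,φ s) v s] ds` on `[0,T]`. -/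
def IsCtrlSol {d m : ℕ} (T : ℝ) (K : ℝ → Matrix (Fin d) (Fin d) ℝ)
    (x₀ : Fin d → ℝ) (b : ℝ → (Fin d → ℝ) → Fin d → ℝ)
    (σ : ℝ → (Fin d → ℝ) → Matrix (Fin d) (Fin m) ℝ)
    (v : ℝ → Fin m → ℝ) (φ : ℝ → Fin d → ℝ) : Prop :=
  ContinuousOn φ (Set.Icc 0 T) ∧
  ∀ t ∈ Set.Icc (0:ℝ) T,
    MeasureTheory.IntegrableOn
      (fun s => (K (t - s)).mulVec (b s (φ s) + (σ s (φ s)).mulVec (v s)))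
      (Set.Ioc 0 t) ∧
    φ t = x₀ + ∫ s in Set.Ioc 0 t,
      (K (t - s)).mulVec (b s (φ s) + (σ s (φ s)).mulVec (v s))

/-! ### Euclidean and Frobenius norms -/

lemma euclNorm_eq {n : ℕ} (x : Fin n → ℝ) : euclNorm x = ‖WithLp.toLp 2 x‖ := by
  simp [euclNorm, EuclideanSpace.norm_eq]

lemma euclNorm_nonneg {n : ℕ} (x : Fin n → ℝ) : 0 ≤ euclNorm x := Real.sqrt_nonneg _

lemma frobNorm_nonneg {n m : ℕ} (A : Matrix (Fin n) (Fin m) ℝ) : 0 ≤ frobNorm A :=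
  Real.sqrt_nonneg _

lemma euclNorm_add_le {n : ℕ} (x y : Fin n → ℝ) :
    euclNorm (x + y) ≤ euclNorm x + euclNorm y := by
  simp only [euclNorm_eq, WithLp.toLp_add]
  exact norm_add_le _ _

lemma euclNorm_mulVec_le {n m : ℕ} (A : Matrix (Fin n) (Fin m) ℝ) (x : Fin m → ℝ) :
    euclNorm (A.mulVec x) ≤ frobNorm A * euclNorm x := by
  unfold euclNorm frobNorm
  rw [← Real.sqrt_mul (by positivity), Finset.sum_mul]
  refine Real.sqrt_le_sqrt (Finset.sum_le_sum fun i _ => ?_)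
  exact Finset.sum_mul_sq_le_sq_mul_sq Finset.univ (A i) x

lemma continuous_euclNorm {n : ℕ} : Continuous (euclNorm (n := n)) := by
  unfold euclNorm
  fun_prop

lemma measurable_frobNorm {n m : ℕ} {K : ℝ → Matrix (Fin n) (Fin m) ℝ}
    (hK : ∀ i j, Measurable fun t => K t i j) : Measurable fun t => frobNorm (K t) := by
  unfold frobNorm
  exact (Finset.measurable_sum _ fun i _ =>
    Finset.measurable_sum _ fun j _ => (hK i j).pow_const 2).sqrt

lemma euclNorm_integral_le {n : ℕ} {s : Set ℝ} {f : ℝ → Fin n → ℝ} {q : ℝ → ℝ}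
    (hs : MeasurableSet s) (hq : IntegrableOn q s)
    (hfq : ∀ x ∈ s, euclNorm (f x) ≤ q x) :
    euclNorm (∫ x in s, f x) ≤ ∫ x in s, q x := by
  have h := (PiLp.continuousLinearEquiv 2 ℝ (fun _ : Fin n => ℝ)).symm.integral_comp_comm
    (μ := volume.restrict s) f
  simp only [PiLp.coe_symm_continuousLinearEquiv] at h
  rw [euclNorm_eq, ← h]
  refine norm_integral_le_of_norm_le hq ((ae_restrict_iff' hs).2 (ae_of_all _ fun x hx => ?_))
  rw [← euclNorm_eq]
  exact hfq x hx

/-! ### Gronwall inequality with an integrable weight -/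

/-- The bound obtained from the constant `a` after crossing `k` pieces of mass `1/2`: with
`B = gronwallSeq a k`, the first `k` pieces contribute at most `B k / 2`, and the maximum `M` over
the first `k + 1` satisfies `M ≤ a + B k / 2 + M / 2`. -/
def gronwallSeq (a : ℝ) : ℕ → ℝ
  | 0 => a
  | k + 1 => 2 * a + k * gronwallSeq a k

lemma gronwallSeq_nonneg {a : ℝ} (ha : 0 ≤ a) (k : ℕ) : 0 ≤ gronwallSeq a k := by
  induction k with
  | zero => exact ha
  | succ k ih => unfold gronwallSeq; positivity

lemma gronwallSeq_le_succ {a : ℝ} (ha : 0 ≤ a) (k : ℕ) :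
    gronwallSeq a k ≤ gronwallSeq a (k + 1) := by
  rcases Nat.eq_zero_or_pos k with rfl | hk
  · simp [gronwallSeq]; linarith
  · have h1 : (1 : ℝ) ≤ k := by exact_mod_cast hk
    have h2 := gronwallSeq_nonneg ha k
    show _ ≤ 2 * a + k * gronwallSeq a k
    nlinarith

/-- Gronwall's inequality for a merely integrable weight `h`, with a bound depending only on the
constant `a` and the number `k` of pieces of mass `1/2` needed to exhaust `∫₀ᵗ h`. -/
lemma gronwall_L1 {T a : ℝ} {u h : ℝ → ℝ} (ha : 0 ≤ a)
    (hu : ContinuousOn u (Icc 0 T)) (hh0 : ∀ s, 0 ≤ h s)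
    (hh : IntegrableOn h (Ioc 0 T))
    (hle : ∀ t ∈ Icc (0 : ℝ) T, u t ≤ a + ∫ s in Ioc 0 t, h s * u s) (k : ℕ) :
    ∀ t ∈ Icc (0 : ℝ) T, (∫ s in Ioc 0 t, h s) ≤ k / 2 → u t ≤ gronwallSeq a k := by
  have hhI : IntegrableOn h (Icc 0 T) := (integrableOn_Icc_iff_integrableOn_Ioc (by simp)).2 hh
  have hhu : IntegrableOn (fun s => h s * u s) (Icc 0 T) :=
    hhI.mul_continuousOn hu isCompact_Icc
  have hsub : ∀ {r t : ℝ}, 0 ≤ r → t ≤ T → Ioc r t ⊆ Icc 0 T := fun h0 h1 x hx =>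
    ⟨h0.trans hx.1.le, hx.2.trans h1⟩
  have hPc : ContinuousOn (fun t => ∫ s in Ioc 0 t, h s) (Icc 0 T) :=
    intervalIntegral.continuousOn_primitive hhI
  have hPmono : ∀ r t : ℝ, r ≤ t → t ≤ T → (∫ s in Ioc 0 r, h s) ≤ ∫ s in Ioc 0 t, h s :=
    fun r t hrt htT => setIntegral_mono_set (hhI.mono_set (hsub le_rfl htT))
      (ae_of_all _ hh0) (Ioc_subset_Ioc_right hrt).eventuallyLE
  -- On an interval where `u ≤ M`, the integral term is at most `M` times the mass of `h`.
  have hbd : ∀ (r t M : ℝ), 0 ≤ r → t ≤ T → (∀ s ∈ Ioc r t, u s ≤ M) →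
      (∫ s in Ioc r t, h s * u s) ≤ (∫ s in Ioc r t, h s) * M := by
    intro r t M hr ht hM
    rw [← integral_mul_const]
    exact setIntegral_mono_on (hhu.mono_set (hsub hr ht))
      ((hhI.mono_set (hsub hr ht)).mul_const M) measurableSet_Ioc
      fun s hs => mul_le_mul_of_nonneg_left (hM s hs) (hh0 s)
  induction k with
  | zero =>
    intro t ht hP
    obtain ⟨M, hM⟩ := isCompact_Icc.bddAbove_image hu
    have h1 := hbd 0 t M le_rfl ht.2 fun s hs => hM ⟨s, hsub le_rfl ht.2 hs, rfl⟩
    have h0 : (∫ s in Ioc 0 t, h s) = 0 :=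
      le_antisymm (by simpa using hP) (integral_nonneg hh0)
    rw [h0, zero_mul] at h1
    have := hle t ht
    simp only [gronwallSeq]
    linarith
  | succ k ih =>
    intro t ht hP
    -- `τ` maximizes `u` on `[0, t]`; only the part of `[0, τ]` of mass beyond `k/2` sees `u τ`.
    obtain ⟨τ, hτ, hmax⟩ := isCompact_Icc.exists_isMaxOn (nonempty_Icc.2 ht.1)
      (hu.mono (Icc_subset_Icc_right ht.2))
    refine (hmax ⟨ht.1, le_rfl⟩ : u t ≤ u τ).trans ?_
    have hτT : τ ∈ Icc (0 : ℝ) T := ⟨hτ.1, hτ.2.trans ht.2⟩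
    have hPτ := (hPmono τ t hτ.2 ht.2).trans hP
    rcases le_total (∫ s in Ioc 0 τ, h s) ((k : ℝ) / 2) with hc | hc
    · exact (ih τ hτT hc).trans (gronwallSeq_le_succ ha k)
    rcases lt_or_ge (u τ) 0 with hneg | hpos
    · exact hneg.le.trans (gronwallSeq_nonneg ha _)
    obtain ⟨r, hr, hPr⟩ := intermediate_value_Icc hτ.1
      (hPc.mono (Icc_subset_Icc_right hτT.2)) (show (k : ℝ) / 2 ∈ Icc _ _ from
        ⟨by simp only [Ioc_self, setIntegral_empty]; positivity, hc⟩)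
    simp only at hPr
    have hsplit : ∀ f : ℝ → ℝ, IntegrableOn f (Icc 0 T) →
        (∫ s in Ioc 0 τ, f s) = (∫ s in Ioc 0 r, f s) + ∫ s in Ioc r τ, f s := by
      intro f hf
      rw [← Ioc_union_Ioc_eq_Ioc hr.1 hr.2]
      exact setIntegral_union (Ioc_disjoint_Ioc_of_le le_rfl) measurableSet_Ioc
        (hf.mono_set (hsub le_rfl (hr.2.trans hτT.2))) (hf.mono_set (hsub hr.1 hτT.2))
    have e1 := hsplit _ hhI
    have e2 := hsplit _ hhu
    have b1 := hbd 0 r (gronwallSeq a k) le_rfl (hr.2.trans hτT.2) fun s hs =>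
      ih s (hsub le_rfl (hr.2.trans hτT.2) hs)
        ((hPmono s r hs.2 (hr.2.trans hτT.2)).trans hPr.le)
    have b2 := hbd r τ (u τ) hr.1 hτT.2 fun s hs =>
      hmax ⟨hr.1.trans hs.1.le, hs.2.trans hτ.2⟩
    have hmass : (∫ s in Ioc r τ, h s) ≤ 1 / 2 := by
      push_cast at hPτ
      linarith
    have b3 := mul_le_mul_of_nonneg_right hmass hpos
    have := hle τ hτT
    rw [hPr] at b1
    show _ ≤ 2 * a + k * gronwallSeq a k
    linarith

/-! ### The quadratic integral inequality for solutions -/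

/-- Cauchy–Schwarz for nonnegative square-integrable functions, in squared form. -/
lemma sq_integral_mul_le {s : Set ℝ} {f g : ℝ → ℝ} (hf0 : ∀ x, 0 ≤ f x) (hg0 : ∀ x, 0 ≤ g x)
    (hf : MemLp f 2 (volume.restrict s)) (hg : MemLp g 2 (volume.restrict s)) :
    (∫ x in s, f x * g x) ^ 2 ≤ (∫ x in s, f x ^ 2) * ∫ x in s, g x ^ 2 := by
  have h := integral_mul_le_Lp_mul_Lq_of_nonneg (μ := volume.restrict s)
    Real.HolderConjugate.two_two (ae_of_all _ hf0) (ae_of_all _ hg0)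
    (by simpa using hf) (by simpa using hg)
  simp only [Real.rpow_ofNat, ← Real.sqrt_eq_rpow] at h
  have hf2 : 0 ≤ ∫ x in s, f x ^ 2 := integral_nonneg fun x => by positivity
  rw [← Real.sqrt_mul hf2] at h
  have hfg : 0 ≤ ∫ x in s, f x * g x := integral_nonneg fun x => mul_nonneg (hf0 x) (hg0 x)
  have hg2 : 0 ≤ ∫ x in s, g x ^ 2 := integral_nonneg fun x => by positivity
  exact (Real.le_sqrt hfg (mul_nonneg hf2 hg2)).1 h

/-- Cauchy–Schwarz turns the Volterra equation into a linear integral inequality for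
`(1 + |φ|)²`, in which the kernel enters only through its `L²` norm. -/
lemma sq_one_add_le {d m : ℕ} {T : ℝ} {K : ℝ → Matrix (Fin d) (Fin d) ℝ}
    (hK : ∀ i j, Measurable fun t => K t i j)
    (hK2 : IntegrableOn (fun t => frobNorm (K t) ^ 2) (Ioc 0 T))
    {x₀ : Fin d → ℝ} {b : ℝ → (Fin d → ℝ) → Fin d → ℝ}
    {σ : ℝ → (Fin d → ℝ) → Matrix (Fin d) (Fin m) ℝ} {C_L : ℝ} (hC : 0 < C_L)
    (hgrowth : ∀ t ∈ Icc (0 : ℝ) T, ∀ x,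
      euclNorm (b t x) + frobNorm (σ t x) ≤ C_L * (1 + euclNorm x))
    {v : ℝ → Fin m → ℝ} (hv : Measurable v)
    (hw2 : IntegrableOn (fun s => (1 + euclNorm (v s)) ^ 2) (Ioc 0 T))
    {φ : ℝ → Fin d → ℝ} (hφ : IsCtrlSol T K x₀ b σ v φ) {t : ℝ} (ht : t ∈ Icc (0 : ℝ) T) :
    (1 + euclNorm (φ t)) ^ 2 ≤ 2 * (1 + euclNorm x₀) ^ 2 +
      ∫ s in Ioc 0 t, 2 * C_L ^ 2 * (∫ r in Ioc 0 T, frobNorm (K r) ^ 2) *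
        (1 + euclNorm (v s)) ^ 2 * (1 + euclNorm (φ s)) ^ 2 := by
  obtain ⟨hcont, hsol⟩ := hφ
  obtain ⟨-, heq⟩ := hsol t ht
  have hsub : Ioc 0 t ⊆ Icc 0 T := fun x hx => ⟨hx.1.le, hx.2.trans ht.2⟩
  have hgc : ContinuousOn (fun s => 1 + euclNorm (φ s)) (Icc 0 T) :=
    continuousOn_const.add (continuous_euclNorm.comp_continuousOn hcont)
  have hK2t : IntegrableOn (fun s => frobNorm (K s) ^ 2) (Ioc 0 t) :=
    hK2.mono_set (Ioc_subset_Ioc_right ht.2)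
  have hKr : IntegrableOn (fun s => frobNorm (K (t - s)) ^ 2) (Ioc 0 t) := by
    have h1 := ((intervalIntegrable_iff_integrableOn_Ioc_of_le ht.1).2 hK2t).comp_sub_left t
    rw [sub_zero, sub_self] at h1
    exact (intervalIntegrable_iff_integrableOn_Ioc_of_le ht.1).1 h1.symm
  have hKval : (∫ s in Ioc 0 t, frobNorm (K (t - s)) ^ 2) ≤
      ∫ r in Ioc 0 T, frobNorm (K r) ^ 2 := by
    have h1 := intervalIntegral.integral_comp_sub_left (a := 0) (b := t)
      (fun s => frobNorm (K s) ^ 2) t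
    rw [sub_zero, sub_self, intervalIntegral.integral_of_le ht.1,
      intervalIntegral.integral_of_le ht.1] at h1
    rw [h1]
    exact setIntegral_mono_set hK2 (ae_of_all _ fun s => sq_nonneg _)
      (Ioc_subset_Ioc_right ht.2).eventuallyLE
  have hwm : Measurable fun s => 1 + euclNorm (v s) :=
    (continuous_euclNorm.measurable.comp hv).const_add 1
  set q : ℝ → ℝ := fun s => C_L * ((1 + euclNorm (v s)) * (1 + euclNorm (φ s))) with hq
  have hg0 : ∀ s, 0 ≤ 1 + euclNorm (φ s) := fun s => by linarith [euclNorm_nonneg (φ s)]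
  have hw0 : ∀ s, 0 ≤ 1 + euclNorm (v s) := fun s => by linarith [euclNorm_nonneg (v s)]
  have hq0 : ∀ s, 0 ≤ q s := fun s =>
    mul_nonneg hC.le (mul_nonneg (hw0 s) (hg0 s))
  have hqm : AEStronglyMeasurable q (volume.restrict (Ioc 0 t)) :=
    (hwm.aestronglyMeasurable.mul
      ((hgc.mono hsub).aestronglyMeasurable measurableSet_Ioc)).const_mul C_L
  have hq2 : IntegrableOn (fun s => q s ^ 2) (Ioc 0 t) := by
    have h1 : IntegrableOn (fun s => (1 + euclNorm (v s)) ^ 2 * (1 + euclNorm (φ s)) ^ 2)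
        (Icc 0 T) := ((integrableOn_Icc_iff_integrableOn_Ioc (by simp)).2 hw2).mul_continuousOn
          (hgc.pow 2) isCompact_Icc
    refine ((h1.mono_set hsub).const_mul (C_L ^ 2)).congr (ae_of_all _ fun s => ?_)
    simp only [hq]
    ring
  have hKL : MemLp (fun s => frobNorm (K (t - s))) 2 (volume.restrict (Ioc 0 t)) :=
    (memLp_two_iff_integrable_sq (((measurable_frobNorm hK).comp
      (measurable_const.sub measurable_id)).aestronglyMeasurable)).2 hKr
  have hqL : MemLp q 2 (volume.restrict (Ioc 0 t)) := (memLp_two_iff_integrable_sq hqm).2 hq2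
  have hI : euclNorm (φ t) ≤ euclNorm x₀ + ∫ s in Ioc 0 t, frobNorm (K (t - s)) * q s := by
    rw [heq]
    refine (euclNorm_add_le _ _).trans (add_le_add_right ?_ _)
    refine euclNorm_integral_le measurableSet_Ioc (hKL.integrable_mul hqL) fun s hs => ?_
    refine (euclNorm_mulVec_le _ _).trans
      (mul_le_mul_of_nonneg_left ?_ (frobNorm_nonneg _))
    have h1 := hgrowth s (hsub hs) (φ s)
    have h2 := euclNorm_add_le (b s (φ s)) ((σ s (φ s)).mulVec (v s))
    have h3 := euclNorm_mulVec_le (σ s (φ s)) (v s)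
    have h4 := mul_le_mul_of_nonneg_right h1 (hw0 s)
    have h5 := mul_nonneg (euclNorm_nonneg (b s (φ s))) (euclNorm_nonneg (v s))
    have h6 := frobNorm_nonneg (σ s (φ s))
    simp only [hq]
    nlinarith
  have hCS := sq_integral_mul_le (fun s => frobNorm_nonneg (K (t - s))) hq0 hKL hqL
  have hq2nn : 0 ≤ ∫ s in Ioc 0 t, q s ^ 2 := integral_nonneg fun s => sq_nonneg _
  have hCS' := hCS.trans (mul_le_mul_of_nonneg_right hKval hq2nn)
  have hrhs : (∫ s in Ioc 0 t, 2 * C_L ^ 2 * (∫ r in Ioc 0 T, frobNorm (K r) ^ 2) *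
        (1 + euclNorm (v s)) ^ 2 * (1 + euclNorm (φ s)) ^ 2) =
      2 * ((∫ r in Ioc 0 T, frobNorm (K r) ^ 2) * ∫ s in Ioc 0 t, q s ^ 2) := by
    rw [← mul_assoc, ← integral_const_mul (2 * ∫ r in Ioc 0 T, frobNorm (K r) ^ 2)]
    refine integral_congr_ae (ae_of_all _ fun s => ?_)
    simp only [hq]
    ring
  rw [hrhs]
  set J := ∫ s in Ioc 0 t, frobNorm (K (t - s)) * q s
  have h1 : (1 + euclNorm (φ t)) ^ 2 ≤ (1 + euclNorm x₀ + J) ^ 2 :=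
    pow_le_pow_left₀ (hg0 t) (by linarith) 2
  nlinarith [sq_nonneg (1 + euclNorm x₀ - J)]

/-- **Uniform bound for solutions of the controlled Volterra equation.**
There is a constant `c̄₀ > 0` depending only on `N`, `|x₀|`, `C_L`, `∫₀ᵀ |K(t)|² dt` and `T`
(and not on `φ` or `v`) bounding `sup_{t∈[0,T]} |φ t|` for every solution `φ` of the
controlled Volterra equation with control `v` of energy at most `N`. -/
theorem controlled_volterra_uniform_bound :
    ∃ cbar : ℝ → ℝ → ℝ → ℝ → ℝ → ℝ,
      (∀ n x c k t, 0 < cbar n x c k t) ∧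
      ∀ (d m : ℕ) (T : ℝ), 0 < T →
      ∀ (K : ℝ → Matrix (Fin d) (Fin d) ℝ), (∀ i j, Measurable fun t => K t i j) →
        IntegrableOn (fun t => frobNorm (K t) ^ 2) (Ioc 0 T) →
      ∀ (x₀ : Fin d → ℝ)
        (b : ℝ → (Fin d → ℝ) → Fin d → ℝ)
        (σ : ℝ → (Fin d → ℝ) → Matrix (Fin d) (Fin m) ℝ),
        Measurable (Function.uncurry b) →
        (∀ i j, Measurable fun p : ℝ × (Fin d → ℝ) => σ p.1 p.2 i j) →
      ∀ (C_L : ℝ), 0 < C_L →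
        (∀ t ∈ Icc (0:ℝ) T, ∀ x,
          euclNorm (b t x) + frobNorm (σ t x) ≤ C_L * (1 + euclNorm x)) →
      ∀ (N : ℝ), 0 < N →
      ∀ (v : ℝ → Fin m → ℝ), Measurable v →
        IntegrableOn (fun s => euclNorm (v s) ^ 2) (Ioc 0 T) →
        (∫ s in Ioc 0 T, euclNorm (v s) ^ 2) ≤ N →
      ∀ (φ : ℝ → Fin d → ℝ), IsCtrlSol T K x₀ b σ v φ →
      ∀ t ∈ Icc (0:ℝ) T,
        euclNorm (φ t) ≤
          cbar N (euclNorm x₀) C_L (∫ s in Ioc 0 T, frobNorm (K s) ^ 2) T := by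
  refine ⟨fun N x c κ T => 1 + gronwallSeq (2 * (1 + x) ^ 2)
    ⌈2 * (2 * c ^ 2 * κ * (2 * T + 2 * N))⌉₊, fun N x c κ T => ?_, ?_⟩
  · have := gronwallSeq_nonneg (a := 2 * (1 + x) ^ 2) (by positivity)
      ⌈2 * (2 * c ^ 2 * κ * (2 * T + 2 * N))⌉₊
    positivity
  intro d m T hT K hK hK2 x₀ b σ _ _ C_L hC hgrowth N hN v hv hv2 hvN φ hφ t ht
  have hm : AEStronglyMeasurable (fun s => (1 + euclNorm (v s)) ^ 2)
      (volume.restrict (Ioc 0 T)) :=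
    (((continuous_euclNorm.measurable.comp hv).const_add 1).pow_const 2).aestronglyMeasurable
  have hdom : IntegrableOn (fun s => 2 + 2 * euclNorm (v s) ^ 2) (Ioc 0 T) :=
    (integrableOn_const (by simp)).add (hv2.const_mul 2)
  have hpt : ∀ s, (1 + euclNorm (v s)) ^ 2 ≤ 2 + 2 * euclNorm (v s) ^ 2 := fun s => by
    nlinarith [sq_nonneg (1 - euclNorm (v s))]
  have hw2 : IntegrableOn (fun s => (1 + euclNorm (v s)) ^ 2) (Ioc 0 T) :=
    Integrable.mono' hdom hm (ae_of_all _ fun s => by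
      rw [Real.norm_of_nonneg (sq_nonneg _)]
      exact hpt s)
  have hwint : (∫ s in Ioc 0 T, (1 + euclNorm (v s)) ^ 2) ≤ 2 * T + 2 * N := by
    refine (integral_mono hw2 hdom hpt).trans ?_
    rw [integral_add (integrable_const _) (hv2.const_mul 2), integral_const_mul]
    have : (∫ _ in Ioc 0 T, (2 : ℝ)) = 2 * T := by
      simp [hT.le, mul_comm]
    linarith
  set κ := ∫ s in Ioc 0 T, frobNorm (K s) ^ 2 with hκ
  have hκ0 : 0 ≤ κ := integral_nonneg fun s => sq_nonneg _
  have hgron := gronwall_L1 (T := T) (a := 2 * (1 + euclNorm x₀) ^ 2)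
    (u := fun s => (1 + euclNorm (φ s)) ^ 2)
    (h := fun s => 2 * C_L ^ 2 * κ * (1 + euclNorm (v s)) ^ 2) (by positivity)
    ((continuousOn_const.add (continuous_euclNorm.comp_continuousOn hφ.1)).pow 2)
    (fun s => by positivity) (hw2.const_mul _)
    (fun s hs => sq_one_add_le hK hK2 hC hgrowth hv hw2 hφ hs)
    ⌈2 * (2 * C_L ^ 2 * κ * (2 * T + 2 * N))⌉₊ t ht ?_
  · nlinarith [euclNorm_nonneg (φ t)]
  · rw [integral_const_mul]
    have h1 : (∫ s in Ioc 0 t, (1 + euclNorm (v s)) ^ 2) ≤ 2 * T + 2 * N :=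
      (setIntegral_mono_set hw2 (ae_of_all _ fun s => sq_nonneg _)
        (Ioc_subset_Ioc_right ht.2).eventuallyLE).trans hwint
    have h2 := mul_le_mul_of_nonneg_left h1 (show 0 ≤ 2 * C_L ^ 2 * κ by positivity)
    have h3 := Nat.le_ceil (2 * (2 * C_L ^ 2 * κ * (2 * T + 2 * N)))
    linarith
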